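/- Let ψ = e^{πi/4} and consider the matrices S_1 (the permutation matrix exchanging x_0 ↔ x_2 and x_1 ↔ x_3), S_2 (the permutation matrix exchanging x_0 ↔ x_1 and x_2 ↔ x_3), T_1 = diag(1,1,−1,−1), T_2 = diag(1,−1,1,−1), T = (ψ/√2)·[[−i,0,0,i],[0,1,1,0],[1,0,0,1],[0,−i,i,0]], and R² = [[0,i,0,0],[i,0,0,0],[0,0,−1,0],[0,0,0,−1]] (the generators of the primitive group (14°) ≅ ℤ_2^4 ⋊ D_{10} in PGL_4(ℂ)). If f ∈ ℂ[x_0,x_1,x_2,x_3] is a homogeneous polynomial of degree 4 such that for every M ∈ {S_1, S_2, T_1, T_2, T, R²} there exists λ ∈ ℂ* with f(Mx) = λ·f(x), then f is a scalar multiple of k = x_0^4 + x_1^4 + x_2^4 + x_3^4 + 6(x_0^2x_1^2 − x_1^2x_2^2 + x_1^2x_3^2 + x_0^2x_2^2 − x_0^2x_3^2 + x_2^2x_3^2). -/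

import Mathlib

open MvPolynomial Complex

/-- The action of a matrix on a polynomial: `(A f)(x) = f (A x)`. -/
noncomputable def matAct {N : ℕ} (A : Matrix (Fin N) (Fin N) ℂ)
    (f : MvPolynomial (Fin N) ℂ) : MvPolynomial (Fin N) ℂ :=
  MvPolynomial.aeval (fun i => ∑ j, MvPolynomial.C (A i j) * MvPolynomial.X j) f

/-- `ψ = e^{πi/4}`, a primitive 8th root of unity. -/
noncomputable def ψ : ℂ := Complex.exp (Real.pi * Complex.I / 4)

/-- `S₁`: the permutation matrix exchanging `x₀ ↔ x₂` and `x₁ ↔ x₃`. -/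
def S₁ : Matrix (Fin 4) (Fin 4) ℂ :=
  !![0, 0, 1, 0; 0, 0, 0, 1; 1, 0, 0, 0; 0, 1, 0, 0]

/-- `S₂`: the permutation matrix exchanging `x₀ ↔ x₁` and `x₂ ↔ x₃`. -/
def S₂ : Matrix (Fin 4) (Fin 4) ℂ :=
  !![0, 1, 0, 0; 1, 0, 0, 0; 0, 0, 0, 1; 0, 0, 1, 0]

/-- `T₁ = diag(1, 1, −1, −1)`. -/
def T₁ : Matrix (Fin 4) (Fin 4) ℂ :=
  !![1, 0, 0, 0; 0, 1, 0, 0; 0, 0, -1, 0; 0, 0, 0, -1]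

/-- `T₂ = diag(1, −1, 1, −1)`. -/
def T₂ : Matrix (Fin 4) (Fin 4) ℂ :=
  !![1, 0, 0, 0; 0, -1, 0, 0; 0, 0, 1, 0; 0, 0, 0, -1]

/-- `T = (ψ/√2)·[[−i,0,0,i],[0,1,1,0],[1,0,0,1],[0,−i,i,0]]`. -/
noncomputable def Tmat : Matrix (Fin 4) (Fin 4) ℂ :=
  (ψ / (Real.sqrt 2 : ℂ)) •
    !![-Complex.I, 0, 0, Complex.I; 0, 1, 1, 0; 1, 0, 0, 1;
       0, -Complex.I, Complex.I, 0]

/-- `R² = [[0,i,0,0],[i,0,0,0],[0,0,−1,0],[0,0,0,−1]]`. -/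
def R2 : Matrix (Fin 4) (Fin 4) ℂ :=
  !![0, Complex.I, 0, 0; Complex.I, 0, 0, 0; 0, 0, -1, 0; 0, 0, 0, -1]

/-- The quartic form
`k = x₀⁴ + x₁⁴ + x₂⁴ + x₃⁴ + 6(x₀²x₁² − x₁²x₂² + x₁²x₃² + x₀²x₂² − x₀²x₃² + x₂²x₃²)`. -/
noncomputable def kQuartic : MvPolynomial (Fin 4) ℂ :=
  X 0 ^ 4 + X 1 ^ 4 + X 2 ^ 4 + X 3 ^ 4 +
    6 * (X 0 ^ 2 * X 1 ^ 2 - X 1 ^ 2 * X 2 ^ 2 + X 1 ^ 2 * X 3 ^ 2 +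
      X 0 ^ 2 * X 2 ^ 2 - X 0 ^ 2 * X 3 ^ 2 + X 2 ^ 2 * X 3 ^ 2)

/-!
Conjugation by `T` permutes the Heisenberg group generated by `S₁, S₂, T₁, T₂` up to fourth roots
of unity, which act trivially on quartics; since a semi-invariant has the same multiplier for
conjugate matrices, this forces the multipliers of `S₁, S₂, T₁, T₂` to be `1`. The quartics fixed
by the Heisenberg group form a five-dimensional space on which `T` and `R²` act by explicit `5 × 5`
matrices, and the common eigenvectors of these two matrices are the multiples of `k`.
-/

section IsHomogeneous

variable {R : Type*} [CommSemiring R] {n : ℕ}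

lemma eval_smul_of_isHomogeneous {σ : Type*} {f : MvPolynomial σ R} (hf : f.IsHomogeneous n)
    (s : R) (x : σ → R) : eval (s • x) f = s ^ n * eval x f := by
  rw [eval_eq, eval_eq, Finset.mul_sum]
  refine Finset.sum_congr rfl fun m hm => ?_
  have hdeg : ∑ i ∈ m.support, m i = n := (hf.degree_eq_sum_deg_support hm).symm
  simp only [Pi.smul_apply, smul_eq_mul, mul_pow, Finset.prod_mul_distrib,
    Finset.prod_pow_eq_pow_sum, hdeg]
  ring

lemma eq_sum_monomial_antidiagonalTuple {N : ℕ} {f : MvPolynomial (Fin N) R}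
    (hf : f.IsHomogeneous n) :
    f = ∑ m ∈ Finset.Nat.antidiagonalTuple N n, monomial (Finsupp.equivFunOnFinite.symm m)
      (coeff (Finsupp.equivFunOnFinite.symm m) f) := by
  ext d
  simp only [coeff_sum, coeff_monomial, Equiv.symm_apply_eq, Finset.sum_ite_eq',
    Equiv.symm_apply_apply]
  split_ifs with hd
  · rfl
  · refine hf.coeff_eq_zero fun hdeg => hd (Finset.Nat.mem_antidiagonalTuple.2 ?_)
    rw [← hdeg, Finsupp.degree_eq_sum]
    rfl

end IsHomogeneous

section MatAct

variable {N n : ℕ} {f : MvPolynomial (Fin N) ℂ} {A B T : Matrix (Fin N) (Fin N) ℂ} {a b s t : ℂ}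

lemma matAct_smul_right (A : Matrix (Fin N) (Fin N) ℂ) (c : ℂ) (f : MvPolynomial (Fin N) ℂ) :
    matAct A (c • f) = c • matAct A f :=
  map_smul _ c f

lemma eval_matAct (A : Matrix (Fin N) (Fin N) ℂ) (f : MvPolynomial (Fin N) ℂ) (x : Fin N → ℂ) :
    eval x (matAct A f) = eval (A.mulVec x) f := by
  have hAx : A.mulVec x = fun i => eval x (∑ j, C (A i j) * X j) := by
    ext i
    simp only [map_sum, map_mul, eval_C, eval_X, Matrix.mulVec, dotProduct]
  rw [hAx]
  exact eval₂Hom_bind₁ (RingHom.id ℂ) x _ f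

lemma matAct_mul (A B : Matrix (Fin N) (Fin N) ℂ) (f : MvPolynomial (Fin N) ℂ) :
    matAct (A * B) f = matAct B (matAct A f) :=
  MvPolynomial.funext fun x => by simp only [eval_matAct, Matrix.mulVec_mulVec]

lemma matAct_smul_left (hf : f.IsHomogeneous n) (s : ℂ) (A : Matrix (Fin N) (Fin N) ℂ) :
    matAct (s • A) f = s ^ n • matAct A f :=
  MvPolynomial.funext fun x => by
    rw [smul_eval, eval_matAct, eval_matAct, Matrix.smul_mulVec, eval_smul_of_isHomogeneous hf]

lemma matAct_diagonal_monomial (d : Fin N → ℂ) (m : Fin N →₀ ℕ) (c : ℂ) :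
    matAct (Matrix.diagonal d) (monomial m c) = monomial m ((∏ i, d i ^ m i) * c) :=
  MvPolynomial.funext fun x => by
    rw [eval_matAct, eval_monomial, eval_monomial, Finsupp.prod_fintype _ _ fun _ => pow_zero _,
      Finsupp.prod_fintype _ _ fun _ => pow_zero _]
    simp only [Matrix.mulVec_diagonal, mul_pow, Finset.prod_mul_distrib]
    ring

lemma coeff_matAct_diagonal (d : Fin N → ℂ) (f : MvPolynomial (Fin N) ℂ) (m : Fin N →₀ ℕ) :
    coeff m (matAct (Matrix.diagonal d) f) = (∏ i, d i ^ m i) * coeff m f := by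
  induction f using MvPolynomial.induction_on' with
  | add p q hp hq => rw [coeff_add, mul_add, ← hp, ← hq, ← coeff_add, matAct, map_add]; rfl
  | monomial u c =>
    rw [matAct_diagonal_monomial, coeff_monomial, coeff_monomial, mul_ite, mul_zero]
    split_ifs with h
    · rw [h]
    · rfl

lemma matAct_permMatrix (σ : Equiv.Perm (Fin N)) (f : MvPolynomial (Fin N) ℂ) :
    matAct (σ.permMatrix ℂ) f = rename σ f :=
  MvPolynomial.funext fun x => by
    rw [eval_matAct, eval_rename, Matrix.permMatrix_mulVec]

lemma coeff_comp_perm_of_matAct_permMatrix_eq {σ : Equiv.Perm (Fin N)}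
    (hσ : matAct (σ.permMatrix ℂ) f = f) (m : Fin N → ℕ) :
    coeff (Finsupp.equivFunOnFinite.symm (m ∘ σ)) f =
      coeff (Finsupp.equivFunOnFinite.symm m) f := by
  rw [matAct_permMatrix] at hσ
  have hm : (Finsupp.equivFunOnFinite.symm (m ∘ σ)).mapDomain σ =
      Finsupp.equivFunOnFinite.symm m := by
    ext i
    rw [← Finsupp.equivMapDomain_eq_mapDomain]
    simp
  rw [← hm, ← coeff_rename_mapDomain σ σ.injective, hσ]

/-- `f` is a semi-invariant of `A`, that is `f(A x) = c f(x)`, with nonzero multiplier `c`. -/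
def HasMultiplier (A : Matrix (Fin N) (Fin N) ℂ) (f : MvPolynomial (Fin N) ℂ) (c : ℂ) : Prop :=
  c ≠ 0 ∧ matAct A f = c • f

namespace HasMultiplier

lemma mul (hA : HasMultiplier A f a) (hB : HasMultiplier B f b) :
    HasMultiplier (A * B) f (a * b) :=
  ⟨mul_ne_zero hA.1 hB.1, by rw [matAct_mul, hA.2, matAct_smul_right, hB.2, smul_smul]⟩

lemma smul_matrix (hA : HasMultiplier A f a) (hf : f.IsHomogeneous n) (hs : s ≠ 0) :
    HasMultiplier (s • A) f (s ^ n * a) :=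
  ⟨mul_ne_zero (pow_ne_zero n hs) hA.1, by rw [matAct_smul_left hf, hA.2, smul_smul]⟩

lemma unique (hf₀ : f ≠ 0) (ha : HasMultiplier A f a) (hb : HasMultiplier A f b) : a = b :=
  smul_left_injective ℂ hf₀ (ha.2.symm.trans hb.2)

lemma eq_of_mul_eq_smul_mul (hA : HasMultiplier A f a) (hB : HasMultiplier B f b)
    (hT : HasMultiplier T f t) (hf : f.IsHomogeneous n) (hf₀ : f ≠ 0) (hs : s ^ n = 1)
    (h : A * T = s • (T * B)) : a = b := by
  have hAT : matAct (A * T) f = (t * b) • f := by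
    rw [h, matAct_smul_left hf, hs, one_smul, (hT.mul hB).2]
  have hmul : a * t = t * b := (hA.mul hT).unique hf₀ ⟨(hT.mul hB).1, hAT⟩
  exact mul_right_cancel₀ hT.1 (hmul.trans (mul_comm t b))

end HasMultiplier

end MatAct

section Heisenberg

variable {f : MvPolynomial (Fin 4) ℂ}

lemma S₁_eq_permMatrix :
    S₁ = (Equiv.swap 0 2 * Equiv.swap 1 3 : Equiv.Perm (Fin 4)).permMatrix ℂ := by
  ext i j; fin_cases i <;> fin_cases j <;>
    simp [S₁, PEquiv.toMatrix_apply, Equiv.swap_apply_def]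

lemma S₂_eq_permMatrix :
    S₂ = (Equiv.swap 0 1 * Equiv.swap 2 3 : Equiv.Perm (Fin 4)).permMatrix ℂ := by
  ext i j; fin_cases i <;> fin_cases j <;>
    simp [S₂, PEquiv.toMatrix_apply, Equiv.swap_apply_def]

lemma T₁_eq_diagonal : T₁ = Matrix.diagonal ![1, 1, -1, -1] := by
  ext i j; fin_cases i <;> fin_cases j <;> simp [T₁]

lemma T₂_eq_diagonal : T₂ = Matrix.diagonal ![1, -1, 1, -1] := by
  ext i j; fin_cases i <;> fin_cases j <;> simp [T₂]

/-- The matrix `T` without its scalar factor `ψ/√2`, which quartics only see through its fourth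
power. -/
def unscaledT : Matrix (Fin 4) (Fin 4) ℂ :=
  !![-I, 0, 0, I; 0, 1, 1, 0; 1, 0, 0, 1; 0, -I, I, 0]

lemma T₂_mul_unscaledT : T₂ * unscaledT = (1 : ℂ) • (unscaledT * (T₁ * T₂)) := by
  ext i j; fin_cases i <;> fin_cases j <;>
    simp [T₁, T₂, unscaledT, Matrix.mul_apply, Fin.sum_univ_four]

lemma S₂_mul_unscaledT : S₂ * unscaledT = (-I) • (unscaledT * (S₁ * T₁)) := by
  ext i j; fin_cases i <;> fin_cases j <;>
    simp [T₁, S₁, S₂, unscaledT, Matrix.mul_apply, Fin.sum_univ_four]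

lemma S₁_mul_unscaledT : S₁ * unscaledT = (-I) • (unscaledT * (S₁ * S₂ * T₁)) := by
  ext i j; fin_cases i <;> fin_cases j <;>
    simp [T₁, S₁, S₂, unscaledT, Matrix.mul_apply, Fin.sum_univ_four]

lemma T₁_mul_unscaledT :
    T₁ * unscaledT = (-1 : ℂ) • (unscaledT * (S₁ * S₂ * (T₁ * T₂))) := by
  ext i j; fin_cases i <;> fin_cases j <;>
    simp [T₁, T₂, S₁, S₂, unscaledT, Matrix.mul_apply, Fin.sum_univ_four]

lemma HasMultiplier.unscaledT_of_Tmat {t : ℂ} (hT : HasMultiplier Tmat f t)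
    (hf : f.IsHomogeneous 4) : ∃ t', HasMultiplier unscaledT f t' := by
  have hs : ψ / (Real.sqrt 2 : ℂ) ≠ 0 := div_ne_zero (exp_ne_zero _) (by simp)
  have hTmat : unscaledT = (ψ / (Real.sqrt 2 : ℂ))⁻¹ • Tmat := (inv_smul_smul₀ hs unscaledT).symm
  exact ⟨_, hTmat ▸ hT.smul_matrix hf (inv_ne_zero hs)⟩

lemma heisenberg_multipliers_eq_one {a b c d t : ℂ} (hf : f.IsHomogeneous 4) (hf₀ : f ≠ 0)
    (hT : HasMultiplier unscaledT f t) (hS₁ : HasMultiplier S₁ f a) (hS₂ : HasMultiplier S₂ f b)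
    (hT₁ : HasMultiplier T₁ f c) (hT₂ : HasMultiplier T₂ f d) :
    a = 1 ∧ b = 1 ∧ c = 1 ∧ d = 1 := by
  have hI : (-I) ^ 4 = 1 := by rw [Even.neg_pow (by decide), I_pow_four]
  have hd : d = c * d :=
    hT₂.eq_of_mul_eq_smul_mul (hT₁.mul hT₂) hT hf hf₀ (one_pow 4) T₂_mul_unscaledT
  have hb : b = a * c :=
    hS₂.eq_of_mul_eq_smul_mul (hS₁.mul hT₁) hT hf hf₀ hI S₂_mul_unscaledT
  have ha : a = a * b * c :=
    hS₁.eq_of_mul_eq_smul_mul ((hS₁.mul hS₂).mul hT₁) hT hf hf₀ hI S₁_mul_unscaledT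
  have hc : c = a * b * (c * d) :=
    hT₁.eq_of_mul_eq_smul_mul ((hS₁.mul hS₂).mul (hT₁.mul hT₂)) hT hf hf₀ (by norm_num)
      T₁_mul_unscaledT
  obtain rfl : c = 1 := (right_eq_mul₀ hT₂.1).1 hd
  obtain rfl : b = a := by simpa using hb
  obtain rfl : b = 1 := (right_eq_mul₀ hS₁.1).1 (by simpa using ha)
  exact ⟨rfl, rfl, rfl, by simpa using hc.symm⟩

/-- The general quartic fixed by the Heisenberg group generated by `S₁`, `S₂`, `T₁`, `T₂`, in
coordinates with respect to the five orbit sums of monomials under `S₁` and `S₂`. -/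
noncomputable def heisenbergQuartic (a b c d e : ℂ) : MvPolynomial (Fin 4) ℂ :=
  C a * (X 0 ^ 4 + X 1 ^ 4 + X 2 ^ 4 + X 3 ^ 4) +
    C b * (X 0 ^ 2 * X 1 ^ 2 + X 2 ^ 2 * X 3 ^ 2) +
    C c * (X 0 ^ 2 * X 2 ^ 2 + X 1 ^ 2 * X 3 ^ 2) +
    C d * (X 0 ^ 2 * X 3 ^ 2 + X 1 ^ 2 * X 2 ^ 2) + C e * (X 0 * X 1 * X 2 * X 3)

lemma eval_heisenbergQuartic (a b c d e : ℂ) (x : Fin 4 → ℂ) :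
    eval x (heisenbergQuartic a b c d e) =
      a * (x 0 ^ 4 + x 1 ^ 4 + x 2 ^ 4 + x 3 ^ 4) + b * (x 0 ^ 2 * x 1 ^ 2 + x 2 ^ 2 * x 3 ^ 2) +
        c * (x 0 ^ 2 * x 2 ^ 2 + x 1 ^ 2 * x 3 ^ 2) + d * (x 0 ^ 2 * x 3 ^ 2 + x 1 ^ 2 * x 2 ^ 2) +
        e * (x 0 * x 1 * x 2 * x 3) := by
  simp only [heisenbergQuartic, map_add, map_mul, map_pow, eval_C, eval_X]

lemma even_add_of_coeff_ne_zero (hT₁ : matAct T₁ f = f) (hT₂ : matAct T₂ f = f) {m : Fin 4 →₀ ℕ}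
    (hm : coeff m f ≠ 0) : Even (m 2 + m 3) ∧ Even (m 1 + m 3) := by
  have h₁ := coeff_matAct_diagonal ![1, 1, -1, -1] f m
  have h₂ := coeff_matAct_diagonal ![1, -1, 1, -1] f m
  rw [← T₁_eq_diagonal, hT₁, right_eq_mul₀ hm] at h₁
  rw [← T₂_eq_diagonal, hT₂, right_eq_mul₀ hm] at h₂
  have hneg : (-1 : ℂ) ≠ 1 := by norm_num
  exact ⟨by simpa [Fin.prod_univ_four, ← pow_add, neg_one_pow_eq_one_iff_even hneg] using h₁,
    by simpa [Fin.prod_univ_four, ← pow_add, neg_one_pow_eq_one_iff_even hneg] using h₂⟩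

lemma filter_even_antidiagonalTuple_four :
    {m ∈ Finset.Nat.antidiagonalTuple 4 4 | Even (m 2 + m 3) ∧ Even (m 1 + m 3)} =
      {![4, 0, 0, 0], ![0, 4, 0, 0], ![0, 0, 4, 0], ![0, 0, 0, 4], ![2, 2, 0, 0], ![0, 0, 2, 2],
        ![2, 0, 2, 0], ![0, 2, 0, 2], ![2, 0, 0, 2], ![0, 2, 2, 0], ![1, 1, 1, 1]} := by
  decide

lemma eval_monomial_equivFunOnFinite_symm (p q r s : ℕ) (c : ℂ) (x : Fin 4 → ℂ) :
    eval x (monomial (Finsupp.equivFunOnFinite.symm ![p, q, r, s]) c) =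
      c * (x 0 ^ p * x 1 ^ q * x 2 ^ r * x 3 ^ s) := by
  simp [eval_monomial, Finsupp.prod_pow, Fin.prod_univ_four]

lemma exists_eq_heisenbergQuartic (hf : f.IsHomogeneous 4) (hS₁ : matAct S₁ f = f)
    (hS₂ : matAct S₂ f = f) (hT₁ : matAct T₁ f = f) (hT₂ : matAct T₂ f = f) :
    ∃ a b c d e, f = heisenbergQuartic a b c d e := by
  let coeffAt (m : Fin 4 → ℕ) : ℂ := coeff (Finsupp.equivFunOnFinite.symm m) f
  have hsum : f = ∑ m ∈ Finset.Nat.antidiagonalTuple 4 4 with Even (m 2 + m 3) ∧ Even (m 1 + m 3),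
      monomial (Finsupp.equivFunOnFinite.symm m) (coeffAt m) := by
    refine (eq_sum_monomial_antidiagonalTuple hf).trans
      (Finset.sum_filter_of_ne fun m _ hm => ?_).symm
    exact even_add_of_coeff_ne_zero hT₁ hT₂ (mt monomial_eq_zero.2 hm)
  rw [S₁_eq_permMatrix] at hS₁
  rw [S₂_eq_permMatrix] at hS₂
  have swap₁ (p q r s : ℕ) : coeffAt ![r, s, p, q] = coeffAt ![p, q, r, s] := by
    convert coeff_comp_perm_of_matAct_permMatrix_eq hS₁ ![p, q, r, s] using 3
    ext i; fin_cases i <;> rfl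
  have swap₂ (p q r s : ℕ) : coeffAt ![q, p, s, r] = coeffAt ![p, q, r, s] := by
    convert coeff_comp_perm_of_matAct_permMatrix_eq hS₂ ![p, q, r, s] using 3
    ext i; fin_cases i <;> rfl
  refine ⟨coeffAt ![4, 0, 0, 0], coeffAt ![2, 2, 0, 0], coeffAt ![2, 0, 2, 0],
    coeffAt ![2, 0, 0, 2], coeffAt ![1, 1, 1, 1], hsum.trans (MvPolynomial.funext fun x => ?_)⟩
  rw [filter_even_antidiagonalTuple_four, eval_heisenbergQuartic]
  repeat rw [Finset.sum_insert (by decide)]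
  simp only [Finset.sum_singleton, map_add, eval_monomial_equivFunOnFinite_symm]
  rw [swap₂ 4 0 0 0, swap₁ 4 0 0 0, swap₁ 0 4 0 0, swap₂ 4 0 0 0, swap₁ 2 2 0 0, swap₂ 2 0 2 0,
    swap₂ 2 0 0 2]
  ring

lemma heisenbergQuartic_inj {a b c d e a' b' c' d' e' : ℂ} :
    heisenbergQuartic a b c d e = heisenbergQuartic a' b' c' d' e' ↔
      a = a' ∧ b = b' ∧ c = c' ∧ d = d' ∧ e = e' := by
  refine ⟨fun h => ?_, ?_⟩
  · have hx (x : Fin 4 → ℂ) := congrArg (eval x) h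
    simp only [eval_heisenbergQuartic] at hx
    have ha : a = a' := by simpa using hx ![1, 0, 0, 0]
    have hb : b = b' := by simpa [ha] using hx ![1, 1, 0, 0]
    have hc : c = c' := by simpa [ha] using hx ![1, 0, 1, 0]
    have hd : d = d' := by simpa [ha] using hx ![1, 0, 0, 1]
    have he : e = e' := by simpa [ha, hb, hc, hd] using hx ![1, 1, 1, 1]
    exact ⟨ha, hb, hc, hd, he⟩
  · rintro ⟨rfl, rfl, rfl, rfl, rfl⟩
    rfl

lemma smul_heisenbergQuartic (s a b c d e : ℂ) :
    s • heisenbergQuartic a b c d e =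
      heisenbergQuartic (s * a) (s * b) (s * c) (s * d) (s * e) := by
  simp only [heisenbergQuartic, smul_eq_C_mul, map_mul]
  ring

lemma unscaledT_mulVec (x : Fin 4 → ℂ) :
    unscaledT.mulVec x = ![-I * x 0 + I * x 3, x 1 + x 2, x 0 + x 3, -I * x 1 + I * x 2] := by
  simp [unscaledT, dotProduct, Fin.sum_univ_four]

lemma R2_mulVec (x : Fin 4 → ℂ) : R2.mulVec x = ![I * x 1, I * x 0, -x 2, -x 3] := by
  simp [R2, dotProduct, Fin.sum_univ_four]

lemma matAct_unscaledT_heisenbergQuartic (a b c d e : ℂ) :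
    matAct unscaledT (heisenbergQuartic a b c d e) =
      heisenbergQuartic (2 * a - c) (-2 * b + 2 * d - e) (-2 * b + 2 * d + e) (12 * a + 2 * c)
        (8 * b + 8 * d) :=
  MvPolynomial.funext fun x => by
    rw [eval_matAct, unscaledT_mulVec, eval_heisenbergQuartic, eval_heisenbergQuartic]
    simp only [Matrix.cons_val]
    ring_nf
    simp only [I_sq, I_pow_four]
    ring

lemma matAct_R2_heisenbergQuartic (a b c d e : ℂ) :
    matAct R2 (heisenbergQuartic a b c d e) = heisenbergQuartic a b (-d) (-c) (-e) :=
  MvPolynomial.funext fun x => by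
    rw [eval_matAct, R2_mulVec, eval_heisenbergQuartic, eval_heisenbergQuartic]
    simp only [Matrix.cons_val]
    ring_nf
    simp only [I_sq, I_pow_four]
    ring

lemma heisenbergQuartic_eq_smul_kQuartic (a : ℂ) :
    heisenbergQuartic a (6 * a) (6 * a) (-6 * a) 0 = a • kQuartic := by
  simp only [heisenbergQuartic, kQuartic, smul_eq_C_mul, map_mul, map_neg, map_ofNat, map_zero]
  ring

lemma eq_of_common_eigenvector {K : Type*} [Field K] [CharZero K] {a b c d e t r : K}
    (hRa : a = r * a) (hRb : b = r * b) (hRc : -d = r * c) (hRe : -e = r * e)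
    (hTa : 2 * a - c = t * a) (hTb : -2 * b + 2 * d - e = t * b) (hTd : 12 * a + 2 * c = t * d)
    (hTe : 8 * b + 8 * d = t * e) :
    b = 6 * a ∧ c = 6 * a ∧ d = -6 * a ∧ e = 0 := by
  by_cases hr : r = 1
  · subst hr
    obtain rfl : d = -c := by linear_combination -hRc
    obtain rfl : e = 0 := by linear_combination (-1 / 2 : K) * hRe
    obtain rfl : b = c := by linear_combination (1 / 8 : K) * hTe
    obtain rfl : b = 6 * a := by linear_combination (-1 / 2 : K) * (hTd + hTb)
    exact ⟨rfl, rfl, by ring, rfl⟩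
  · have eq_zero {z : K} (hz : z = r * z) : z = 0 :=
      by_contra fun hz₀ => hr ((right_eq_mul₀ hz₀).1 hz)
    obtain rfl := eq_zero hRa
    obtain rfl := eq_zero hRb
    obtain rfl : c = 0 := by linear_combination -hTa
    obtain rfl : d = 0 := by linear_combination -hRc
    obtain rfl : e = 0 := by linear_combination -hTb
    simp

end Heisenberg

theorem stmt13 (f : MvPolynomial (Fin 4) ℂ) (hf : f.IsHomogeneous 4)
    (hinv : ∀ M ∈ ({S₁, S₂, T₁, T₂, Tmat, R2} : Set (Matrix (Fin 4) (Fin 4) ℂ)),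
      ∃ c : ℂ, c ≠ 0 ∧ matAct M f = c • f) :
    ∃ c : ℂ, f = c • kQuartic := by
  by_cases hf₀ : f = 0
  · exact ⟨0, by rw [hf₀, zero_smul]⟩
  have semi (M) (hM : M ∈ ({S₁, S₂, T₁, T₂, Tmat, R2} : Set (Matrix (Fin 4) (Fin 4) ℂ))) :
      ∃ c, HasMultiplier M f c := hinv M hM
  obtain ⟨s₁, hS₁⟩ := semi S₁ (by simp)
  obtain ⟨s₂, hS₂⟩ := semi S₂ (by simp)
  obtain ⟨t₁, hT₁⟩ := semi T₁ (by simp)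
  obtain ⟨t₂, hT₂⟩ := semi T₂ (by simp)
  obtain ⟨_, hTmat⟩ := semi Tmat (by simp)
  obtain ⟨r, -, hR⟩ := semi R2 (by simp)
  obtain ⟨t, hT⟩ := hTmat.unscaledT_of_Tmat hf
  obtain ⟨rfl, rfl, rfl, rfl⟩ := heisenberg_multipliers_eq_one hf hf₀ hT hS₁ hS₂ hT₁ hT₂
  obtain ⟨a, b, c, d, e, rfl⟩ := exists_eq_heisenbergQuartic hf (by simpa using hS₁.2)
    (by simpa using hS₂.2) (by simpa using hT₁.2) (by simpa using hT₂.2)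
  replace hT := hT.2
  rw [matAct_R2_heisenbergQuartic, smul_heisenbergQuartic, heisenbergQuartic_inj] at hR
  rw [matAct_unscaledT_heisenbergQuartic, smul_heisenbergQuartic, heisenbergQuartic_inj] at hT
  obtain ⟨hRa, hRb, hRc, -, hRe⟩ := hR
  obtain ⟨hTa, hTb, -, hTd, hTe⟩ := hT
  obtain ⟨rfl, rfl, rfl, rfl⟩ := eq_of_common_eigenvector hRa hRb hRc hRe hTa hTb hTd hTe
  exact ⟨a, heisenbergQuartic_eq_smul_kQuartic a⟩
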